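/- arXiv:0910.3973 — 5 statements merged into one kernel-verified Lean document; each statement's English description precedes it below -/
import Mathlib

section
/- For every real λ ≥ 1, every real N₀ > 0, and every real q with 0 < q ≤ 1, q·min(1, 1/(λq))·log(1 + (log(1/q) + 1)/N₀) ≤ (1/λ)·log(1 + (log λ + 1)/N₀). -/
/-- Optimization step in Lemma 4: for `λ ≥ 1`, `N₀ > 0`, `0 < q ≤ 1`,
`q·min(1, 1/(λq))·log(1 + (log(1/q) + 1)/N₀) ≤ (1/λ)·log(1 + (log λ + 1)/N₀)`. -/
theorem throughput_bound_optimization (lam N₀ q : ℝ)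
    (hlam : 1 ≤ lam) (hN₀ : 0 < N₀) (hq0 : 0 < q) (hq1 : q ≤ 1) :
    q * min 1 (1 / (lam * q)) * Real.log (1 + (Real.log (1 / q) + 1) / N₀)
      ≤ (1 / lam) * Real.log (1 + (Real.log lam + 1) / N₀) := by
  have hl : 0 < lam := by linarith
  have hb : 0 ≤ Real.log lam := Real.log_nonneg hlam
  have ha : 0 ≤ Real.log (1 / q) := Real.log_nonneg (by rw [le_div_iff₀ hq0]; linarith)
  have hlq : 0 < lam * q := by positivity
  rcases le_total 1 (lam * q) with h | h
  · rw [min_eq_right (by rw [div_le_iff₀ hlq]; linarith)]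
    have e : q * (1 / (lam * q)) = 1 / lam := by field_simp
    rw [e]
    have hle : Real.log (1 / q) ≤ Real.log lam :=
      Real.log_le_log (by positivity) (by rw [div_le_iff₀ hq0]; exact h)
    gcongr
  · rw [min_eq_left (by rw [le_div_iff₀ hlq]; linarith), mul_one]
    have hx : Real.log (1 / (lam * q)) ≤ 1 / (lam * q) - 1 :=
      Real.log_le_sub_one_of_pos (by positivity)
    have hd0 : 0 ≤ Real.log (1 / (lam * q)) :=
      Real.log_nonneg (by rw [le_div_iff₀ hlq]; linarith)
    have hd : Real.log (1 / (lam * q)) = Real.log (1 / q) - Real.log lam := by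
      rw [one_div, one_div, Real.log_inv, Real.log_inv, Real.log_mul hl.ne' hq0.ne']
      ring
    rw [hd] at hx hd0
    generalize Real.log (1 / q) = a at *
    generalize Real.log lam = b at *
    have hA : 0 < 1 + (a + 1) / N₀ := by positivity
    have hB : 0 < 1 + (b + 1) / N₀ := by positivity
    have h1 := Real.log_le_sub_one_of_pos (div_pos hA hB)
    rw [Real.log_div hA.ne' hB.ne'] at h1
    have h2 := Real.one_sub_inv_le_log_of_pos hB
    have hS : 0 < N₀ + b + 1 := by positivity
    have e1 : (1 + (a + 1) / N₀) / (1 + (b + 1) / N₀) - 1 = (a - b) * (1 / (N₀ + b + 1)) := by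
      have : 1 + (b + 1) / N₀ = (N₀ + b + 1) / N₀ := by field_simp; ring
      rw [this]; field_simp; ring
    have e2 : 1 - (1 + (b + 1) / N₀)⁻¹ = (b + 1) * (1 / (N₀ + b + 1)) := by
      have : 1 + (b + 1) / N₀ = (N₀ + b + 1) / N₀ := by field_simp; ring
      rw [this]; field_simp; ring
    rw [e1] at h1
    rw [e2] at h2
    have hs : 0 < 1 / (N₀ + b + 1) := by positivity
    generalize 1 / (N₀ + b + 1) = s at *
    generalize Real.log (1 + (a + 1) / N₀) = LA at *
    generalize Real.log (1 + (b + 1) / N₀) = LB at *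
    have h3 : s ≤ LB := by nlinarith
    have h4 : LA ≤ (1 + (a - b)) * LB := by nlinarith
    have h5 : LA ≤ 1 / (lam * q) * LB :=
      h4.trans (mul_le_mul_of_nonneg_right (by linarith) (by linarith))
    calc q * LA ≤ q * (1 / (lam * q) * LB) := by gcongr
      _ = 1 / lam * LB := by field_simp
end

section
/- Fix reals α̂ > 0 and δ > 0. For each integer n large enough that q_n := δ·(log n)²/n ∈ (0,1), set τ_n := log(1/q_n), let λ_n ≥ 1 be reals with λ_n·(log n)/n → 0 as n → ∞, and define Δ_n := 1/(1 + λ_n·log((1−q_n)^{−1})) and T_n := n·q_n·Δ_n·log(1 + τ_n/(n·α̂·q_n·Δ_n)). Then T_n·α̂/log n → 1 as n → ∞; that is, T_n is asymptotically equivalent to (log n)/α̂. -/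
open Filter Real

/-- Theorem 1 (Poisson arrival process): with `q_n = δ·(log n)²/n`, `τ_n = log(1/q_n)`,
delay bounds `λ_n ≥ 1` with `λ_n·(log n)/n → 0`, and full-buffer probability
`Δ_n = 1/(1 + λ_n·log((1−q_n)⁻¹))`, the effective throughput
`T_n = n·q_n·Δ_n·log(1 + τ_n/(n·ahat·q_n·Δ_n))` satisfies `T_n·ahat/log n → 1`. -/
theorem effective_throughput_PAP (ahat δ : ℝ) (hahat : 0 < ahat) (hδ : 0 < δ)
    (lam : ℕ → ℝ) (hlam1 : ∀ n, 1 ≤ lam n)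
    (hlam : Tendsto (fun n : ℕ => lam n * Real.log n / n) atTop (nhds 0)) :
    Tendsto (fun n : ℕ =>
      let q := δ * (Real.log n) ^ 2 / n
      let τ := Real.log (1 / q)
      let Δ := 1 / (1 + lam n * Real.log (1 - q)⁻¹)
      (n * q * Δ * Real.log (1 + τ / (n * ahat * q * Δ))) * ahat / Real.log n)
      atTop (nhds 1) := by
  have hL : Tendsto (fun n : ℕ => Real.log n) atTop atTop :=
    Real.tendsto_log_atTop.comp tendsto_natCast_atTop_atTop
  have hLinv : Tendsto (fun n : ℕ => (Real.log n)⁻¹) atTop (nhds 0) :=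
    tendsto_inv_atTop_zero.comp hL
  have hq : Tendsto (fun n : ℕ => δ * (Real.log n) ^ 2 / n) atTop (nhds 0) := by
    have h := (Real.isLittleO_pow_log_id_atTop (n := 2)).tendsto_div_nhds_zero.comp
      (tendsto_natCast_atTop_atTop (R := ℝ))
    have h2 := h.const_mul δ
    simp only [mul_zero] at h2
    refine h2.congr fun n => ?_
    simp [mul_div_assoc]
  have hLL : Tendsto (fun n : ℕ => Real.log (Real.log n) / Real.log n) atTop (nhds 0) := by
    have h := Real.isLittleO_log_id_atTop.tendsto_div_nhds_zero.comp hL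
    exact h
  have hev : ∀ᶠ n : ℕ in atTop, 0 < (n : ℝ) ∧ 1 < Real.log n ∧
      δ * (Real.log n) ^ 2 / n < 1 / 2 := by
    filter_upwards [eventually_gt_atTop 0, hL.eventually_gt_atTop 1,
      hq.eventually_lt_const (by norm_num : (0 : ℝ) < 1 / 2)] with n h1 h2 h3
    exact ⟨by exact_mod_cast h1, h2, h3⟩
  have hτ : Tendsto (fun n : ℕ => Real.log (1 / (δ * (Real.log n) ^ 2 / n)) / Real.log n)
      atTop (nhds 1) := by
    have h : Tendsto (fun n : ℕ => 1 - Real.log δ * (Real.log n)⁻¹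
        - 2 * (Real.log (Real.log n) / Real.log n)) atTop
        (nhds (1 - Real.log δ * 0 - 2 * 0)) :=
      (tendsto_const_nhds.sub (hLinv.const_mul _)).sub (hLL.const_mul 2)
    simp only [mul_zero, sub_zero] at h
    refine h.congr' ?_
    filter_upwards [hev] with n hn
    obtain ⟨h1, h2, h3⟩ := hn
    have h4 : 0 < Real.log n := by linarith
    rw [one_div, Real.log_inv, Real.log_div (by positivity) (by positivity),
      Real.log_mul (by positivity) (by positivity), Real.log_pow]
    field_simp
    push_cast
    ring
  have hD : Tendsto (fun n : ℕ => (1 + lam n * Real.log (1 - δ * (Real.log n) ^ 2 / n)⁻¹)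
      / Real.log n) atTop (nhds 0) := by
    have hup : Tendsto (fun n : ℕ => (Real.log n)⁻¹ + 2 * δ * (lam n * Real.log n / n))
        atTop (nhds 0) := by
      have := hLinv.add (hlam.const_mul (2 * δ))
      simpa using this
    refine squeeze_zero' ?_ ?_ hup
    · filter_upwards [hev] with n hn
      obtain ⟨h1, h2, h3⟩ := hn
      have hl := hlam1 n
      have hq0 : 0 ≤ δ * (Real.log n) ^ 2 / n := by positivity
      have : 0 ≤ Real.log (1 - δ * (Real.log n) ^ 2 / n)⁻¹ :=
        Real.log_nonneg ((one_le_inv₀ (by linarith)).2 (by linarith))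
      have h4 : 0 ≤ lam n := by linarith
      positivity
    · filter_upwards [hev] with n hn
      obtain ⟨h1, h2, h3⟩ := hn
      have hl := hlam1 n
      have hq0 : 0 ≤ δ * (Real.log n) ^ 2 / n := by positivity
      have hb : Real.log (1 - δ * (Real.log n) ^ 2 / n)⁻¹ ≤ 2 * (δ * (Real.log n) ^ 2 / n) := by
        generalize δ * (Real.log n) ^ 2 / n = q at *
        have h5 : 0 < 1 - q := by linarith
        have := Real.log_le_sub_one_of_pos (inv_pos.2 h5)
        refine this.trans ?_
        have : (1 - q)⁻¹ ≤ 1 + 2 * q := by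
          rw [inv_le_iff_one_le_mul₀ h5]
          nlinarith
        linarith
      have h4 : 0 ≤ lam n := by linarith
      have h6 : 0 < Real.log n := by linarith
      calc _ ≤ (1 + lam n * (2 * (δ * (Real.log n) ^ 2 / n))) / Real.log n := by gcongr
        _ = _ := by field_simp
  have hpos : ∀ᶠ n : ℕ in atTop, 0 < Real.log (1 / (δ * (Real.log n) ^ 2 / n)) ∧
      0 < 1 + lam n * Real.log (1 - δ * (Real.log n) ^ 2 / n)⁻¹ := by
    filter_upwards [hev] with n hn
    obtain ⟨h1, h2, h3⟩ := hn
    have hl := hlam1 n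
    have h6 : 0 < Real.log n := by linarith
    have hq0 : 0 < δ * (Real.log n) ^ 2 / n := by positivity
    have : 0 ≤ Real.log (1 - δ * (Real.log n) ^ 2 / n)⁻¹ :=
      Real.log_nonneg ((one_le_inv₀ (by linarith)).2 (by linarith))
    have h4 : 0 ≤ lam n := by linarith
    refine ⟨Real.log_pos ?_, by positivity⟩
    rw [lt_div_iff₀ hq0]; linarith
  -- the argument of the logarithm
  let u : ℕ → ℝ := fun n => Real.log (1 / (δ * (Real.log n) ^ 2 / n)) *
    (1 + lam n * Real.log (1 - δ * (Real.log n) ^ 2 / n)⁻¹) / (ahat * δ * (Real.log n) ^ 2)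
  have hu : Tendsto u atTop (nhds 0) := by
    have h := (hτ.mul hD).mul_const ((ahat * δ)⁻¹)
    simp only [mul_zero, zero_mul] at h
    refine h.congr fun n => ?_
    simp only [u, div_eq_mul_inv, mul_inv]
    ring
  have hupos : ∀ᶠ n in atTop, 0 < u n := by
    filter_upwards [hev, hpos] with n hn hp
    obtain ⟨h1, h2, h3⟩ := hn
    obtain ⟨h4, h5⟩ := hp
    have h6 : 0 < Real.log n := by linarith
    exact div_pos (mul_pos h4 h5) (by positivity)
  have hlog : Tendsto (fun n => Real.log (1 + u n) / u n) atTop (nhds 1) := by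
    have hlow : Tendsto (fun n => (1 + u n)⁻¹) atTop (nhds 1) := by
      have := (hu.const_add 1).inv₀ (by norm_num)
      simpa using this
    refine tendsto_of_tendsto_of_tendsto_of_le_of_le' hlow tendsto_const_nhds ?_ ?_
    · filter_upwards [hupos] with n hn
      have := Real.one_sub_inv_le_log_of_pos (show 0 < 1 + u n by linarith)
      rw [le_div_iff₀ hn]
      refine le_trans (le_of_eq ?_) this
      field_simp
      ring
    · filter_upwards [hupos] with n hn
      have := Real.log_le_sub_one_of_pos (show 0 < 1 + u n by linarith)
      rw [div_le_one hn]
      linarith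
  have hfin := hτ.mul hlog
  rw [mul_one] at hfin
  refine hfin.congr' ?_
  filter_upwards [hev, hpos] with n hn hp
  obtain ⟨h1, h2, h3⟩ := hn
  obtain ⟨h4, h5⟩ := hp
  have h6 : 0 < Real.log n := by linarith
  simp only [u]
  have hnq : (n : ℝ) * (δ * (Real.log n) ^ 2 / n) = δ * (Real.log n) ^ 2 := by field_simp
  have hnq2 : (n : ℝ) * ahat * (δ * (Real.log n) ^ 2 / n) = ahat * δ * (Real.log n) ^ 2 := by
    field_simp
  rw [hnq, hnq2]
  generalize Real.log (1 / (δ * (Real.log n) ^ 2 / n)) = t at *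
  generalize 1 + lam n * Real.log (1 - δ * (Real.log n) ^ 2 / n)⁻¹ = D at *
  have harg : t / (ahat * δ * (Real.log n) ^ 2 * (1 / D)) =
      t * D / (ahat * δ * (Real.log n) ^ 2) := by field_simp
  rw [harg]
  generalize Real.log (1 + t * D / (ahat * δ * (Real.log n) ^ 2)) = M at *
  field_simp
end

section
/- Fix reals α̂ > 0 and δ > 0. For each integer n large enough that q_n := δ·(log n)²/n ∈ (0,1), set τ_n := log(1/q_n), let λ_n ≥ 1 be reals with λ_n·(log n)/n → 0 as n → ∞, and define Δ_n := 1/(1 + (λ_n − 1)·q_n) and T_n := n·q_n·Δ_n·log(1 + τ_n/(n·α̂·q_n·Δ_n)). Then T_n·α̂/log n → 1 as n → ∞; that is, T_n is asymptotically equivalent to (log n)/α̂. -/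
open Filter Real

/-- Theorem 2 (Bernoulli arrival process): with `q_n = δ·(log n)²/n`, `τ_n = log(1/q_n)`,
delay bounds `λ_n ≥ 1` with `λ_n·(log n)/n → 0`, and full-buffer probability
`Δ_n = 1/(1 + (λ_n − 1)·q_n)`, the effective throughput
`T_n = n·q_n·Δ_n·log(1 + τ_n/(n·ahat·q_n·Δ_n))` satisfies `T_n·ahat/log n → 1`. -/
theorem effective_throughput_BAP (ahat δ : ℝ) (hahat : 0 < ahat) (hδ : 0 < δ)
    (lam : ℕ → ℝ) (hlam1 : ∀ n, 1 ≤ lam n)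
    (hlam : Tendsto (fun n : ℕ => lam n * Real.log n / n) atTop (nhds 0)) :
    Tendsto (fun n : ℕ =>
      let q := δ * (Real.log n) ^ 2 / n
      let τ := Real.log (1 / q)
      let Δ := 1 / (1 + (lam n - 1) * q)
      (n * q * Δ * Real.log (1 + τ / (n * ahat * q * Δ))) * ahat / Real.log n)
      atTop (nhds 1) := by
  have hL : Tendsto (fun n : ℕ => Real.log n) atTop atTop :=
    Real.tendsto_log_atTop.comp tendsto_natCast_atTop_atTop
  have hLi : Tendsto (fun n : ℕ => (Real.log n)⁻¹) atTop (nhds 0) :=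
    tendsto_inv_atTop_zero.comp hL
  have hll : Tendsto (fun n : ℕ => Real.log (Real.log n) / Real.log n) atTop (nhds 0) :=
    (Real.isLittleO_log_id_atTop.tendsto_div_nhds_zero).comp hL
  have hLn : Tendsto (fun n : ℕ => Real.log n / (n : ℝ)) atTop (nhds 0) :=
    (Real.isLittleO_log_id_atTop.tendsto_div_nhds_zero).comp tendsto_natCast_atTop_atTop
  have hbig : ∀ᶠ n : ℕ in atTop, 0 < Real.log n := hL.eventually_gt_atTop 0
  have hn0 : ∀ᶠ n : ℕ in atTop, 0 < (n : ℝ) :=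
    (tendsto_natCast_atTop_atTop (R := ℝ)).eventually_gt_atTop 0
  have ht : Tendsto (fun n : ℕ => Real.log (1 / (δ * (Real.log n) ^ 2 / n)) / Real.log n)
      atTop (nhds 1) := by
    have h : Tendsto (fun n : ℕ => 1 - Real.log δ * (Real.log n)⁻¹
        - 2 * (Real.log (Real.log n) / Real.log n)) atTop (nhds (1 - Real.log δ * 0 - 2 * 0)) :=
      (tendsto_const_nhds.sub (hLi.const_mul _)).sub (hll.const_mul _)
    simp only [mul_zero, sub_zero] at h
    refine h.congr' ?_
    filter_upwards [hbig, hn0] with n h1 h2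
    rw [one_div, Real.log_inv, Real.log_div (by positivity) h2.ne',
      Real.log_mul hδ.ne' (by positivity), Real.log_pow]
    field_simp
    push_cast
    ring
  have hu : Tendsto (fun n : ℕ => (1 + (lam n - 1) * (δ * (Real.log n) ^ 2 / n)) / Real.log n)
      atTop (nhds 0) := by
    have h := hLi.add ((hlam.sub hLn).const_mul δ)
    simp only [mul_zero, sub_zero, add_zero] at h
    refine h.congr' ?_
    filter_upwards [hbig, hn0] with n h1 h2
    field_simp
  have hx := (ht.mul hu).div_const (ahat * δ)
  simp only [mul_zero, zero_div] at hx
  have hne : ∀ᶠ n : ℕ in atTop, Real.log (1 / (δ * (Real.log n) ^ 2 / n)) / Real.log n *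
      ((1 + (lam n - 1) * (δ * (Real.log n) ^ 2 / n)) / Real.log n) / (ahat * δ) ≠ 0 := by
    filter_upwards [hbig, hn0, ht.eventually_const_lt zero_lt_one] with n h1 h2 h3
    have h4 : 0 ≤ lam n - 1 := sub_nonneg.2 (hlam1 n)
    exact (div_pos (mul_pos h3 (div_pos (by positivity) h1)) (by positivity)).ne'
  have hd := (Real.hasDerivAt_log (one_ne_zero)).tendsto_slope_zero.comp
    (tendsto_nhdsWithin_iff.2 ⟨hx, hne⟩)
  have hfin := hd.mul ht
  simp only [inv_one, mul_one] at hfin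
  refine hfin.congr' ?_
  filter_upwards [hbig, hn0, ht.eventually_const_lt zero_lt_one] with n h1 h2 h3
  have h4 : 0 ≤ lam n - 1 := sub_nonneg.2 (hlam1 n)
  have hτ : 0 < Real.log (1 / (δ * (Real.log n) ^ 2 / n)) := by
    have := mul_pos h3 h1
    rwa [div_mul_cancel₀ _ h1.ne'] at this
  simp only [Function.comp, Real.log_one, sub_zero, smul_eq_mul]
  generalize Real.log (1 / (δ * (Real.log n) ^ 2 / n)) = τ at *
  have hD : 0 < 1 + (lam n - 1) * (δ * (Real.log n) ^ 2 / n) := by positivity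
  generalize 1 + (lam n - 1) * (δ * (Real.log n) ^ 2 / n) = D at *
  have e : τ / (n * ahat * (δ * (Real.log n) ^ 2 / n) * (1 / D))
      = τ / Real.log n * (D / Real.log n) / (ahat * δ) := by
    field_simp
  rw [e]
  generalize Real.log (1 + τ / Real.log n * (D / Real.log n) / (ahat * δ)) = Y
  field_simp
end

section
/- Fix reals α̂ > 0 and δ > 0. For each integer n large enough that q_n := δ·(log n)²/n ∈ (0,1), set τ_n := log(1/q_n), let λ_n be positive integers with λ_n·(log n)²/n → 0 as n → ∞, and define Δ_n := (1 − (1−q_n)^{λ_n})/(λ_n·q_n) and T_n := n·q_n·Δ_n·log(1 + τ_n/(n·α̂·q_n·Δ_n)). Then T_n·α̂/log n → 1 as n → ∞; that is, T_n is asymptotically equivalent to (log n)/α̂. -/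
open Filter Real

/-- Theorem 3, part (i) (constant arrival process, `λ = o(n/(log n)²)`):
with `q_n = δ·(log n)²/n`, `τ_n = log(1/q_n)`, positive integer delay bounds `λ_n`
with `λ_n·(log n)²/n → 0`, and full-buffer probability
`Δ_n = (1 − (1−q_n)^{λ_n})/(λ_n·q_n)`, the effective throughput
`T_n = n·q_n·Δ_n·log(1 + τ_n/(n·ahat·q_n·Δ_n))` satisfies `T_n·ahat/log n → 1`. -/
theorem effective_throughput_CAP_small_lambda (ahat δ : ℝ) (hahat : 0 < ahat) (hδ : 0 < δ)
    (lam : ℕ → ℕ) (hlam1 : ∀ n, 0 < lam n)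
    (hlam : Tendsto (fun n : ℕ => (lam n : ℝ) * (Real.log n) ^ 2 / n) atTop (nhds 0)) :
    Tendsto (fun n : ℕ =>
      let q := δ * (Real.log n) ^ 2 / n
      let τ := Real.log (1 / q)
      let Δ := (1 - (1 - q) ^ (lam n)) / ((lam n : ℝ) * q)
      (n * q * Δ * Real.log (1 + τ / (n * ahat * q * Δ))) * ahat / Real.log n)
      atTop (nhds 1) := by
  have hL : Tendsto (fun n : ℕ => Real.log (n : ℝ)) atTop atTop :=
    Real.tendsto_log_atTop.comp tendsto_natCast_atTop_atTop
  set q : ℕ → ℝ := fun n => δ * (Real.log n) ^ 2 / n with hq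
  set Δ : ℕ → ℝ := fun n => (1 - (1 - q n) ^ (lam n)) / ((lam n : ℝ) * q n) with hΔ
  set τ : ℕ → ℝ := fun n => Real.log (1 / q n) with hτ
  have hqpos : ∀ᶠ n : ℕ in atTop, 0 < q n := by
    filter_upwards [hL.eventually_gt_atTop 0, eventually_gt_atTop 0] with n h1 h2
    have : (0 : ℝ) < n := by exact_mod_cast h2
    simp only [hq]; positivity
  have hu : Tendsto (fun n => (lam n : ℝ) * q n) atTop (nhds 0) := by
    have := hlam.const_mul δ
    rw [mul_zero] at this
    refine this.congr fun n => ?_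
    simp only [hq]; ring
  have hΔ1 : Tendsto Δ atTop (nhds 1) := by
    have hlow : Tendsto (fun n => 1 / (1 + (lam n : ℝ) * q n)) atTop (nhds 1) := by
      have := (tendsto_const_nhds (x := (1 : ℝ))).div (hu.const_add 1) (by norm_num)
      rw [add_zero, div_one] at this
      exact this
    have hb : ∀ᶠ n : ℕ in atTop, 1 / (1 + (lam n : ℝ) * q n) ≤ Δ n ∧ Δ n ≤ 1 := by
      filter_upwards [hqpos, hu.eventually_lt_const one_pos] with n h1 h2
      have hl : (1 : ℝ) ≤ lam n := by exact_mod_cast hlam1 n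
      have hq1 : q n < 1 := by nlinarith
      have hu0 : 0 < (lam n : ℝ) * q n := by positivity
      have hB := one_add_mul_le_pow (a := -q n) (by linarith) (lam n)
      have hE : (1 - q n) ^ (lam n) ≤ 1 / (1 + (lam n : ℝ) * q n) := by
        have e1 : (1 - q n) ^ (lam n) ≤ (Real.exp (-q n)) ^ (lam n) := by
          apply pow_le_pow_left₀ (by linarith)
          have := Real.add_one_le_exp (-q n); linarith
        rw [← Real.exp_nat_mul, mul_neg, Real.exp_neg] at e1
        refine e1.trans ?_
        rw [← one_div]
        apply one_div_le_one_div_of_le (by linarith)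
        have := Real.add_one_le_exp ((lam n : ℝ) * q n); linarith
      constructor
      · simp only [hΔ]
        rw [le_div_iff₀ hu0]
        have : 1 / (1 + (lam n : ℝ) * q n) * (lam n * q n) = 1 - 1 / (1 + (lam n : ℝ) * q n) := by
          field_simp; ring
        linarith
      · simp only [hΔ]
        rw [div_le_one hu0]
        rw [← sub_eq_add_neg] at hB
        linarith
    exact tendsto_of_tendsto_of_tendsto_of_le_of_le' hlow tendsto_const_nhds
      (hb.mono fun _ h => h.1) (hb.mono fun _ h => h.2)
  have hτL : Tendsto (fun n => τ n / Real.log (n : ℝ)) atTop (nhds 1) := by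
    have h1 : Tendsto (fun n : ℕ => Real.log (Real.log (n : ℝ)) / Real.log n) atTop (nhds 0) :=
      (Real.isLittleO_log_id_atTop.tendsto_div_nhds_zero).comp hL
    have h2 : Tendsto (fun n : ℕ => Real.log δ / Real.log (n : ℝ)) atTop (nhds 0) :=
      hL.const_div_atTop _
    have h3 := ((tendsto_const_nhds (x := (1 : ℝ))).sub h2).sub (h1.const_mul 2)
    simp only [mul_zero, sub_zero] at h3
    refine h3.congr' ?_
    filter_upwards [hL.eventually_gt_atTop 0, eventually_gt_atTop 0] with n g1 g2
    have g3 : (0 : ℝ) < n := by exact_mod_cast g2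
    simp only [hτ, hq]
    rw [one_div, Real.log_inv, Real.log_div (by positivity) (by positivity),
      Real.log_mul (by positivity) (by positivity), Real.log_pow]
    field_simp
    push_cast
    ring
  set x : ℕ → ℝ := fun n => τ n / (n * ahat * q n * Δ n) with hx
  have hx0 : Tendsto x atTop (nhds 0) := by
    have h1 : Tendsto (fun n : ℕ => (ahat * δ * Real.log (n : ℝ))) atTop atTop :=
      hL.const_mul_atTop (by positivity)
    have h2 := (hτL.div hΔ1 one_ne_zero).mul h1.inv_tendsto_atTop
    rw [mul_zero] at h2
    refine h2.congr' ?_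
    filter_upwards [hL.eventually_gt_atTop 0, eventually_gt_atTop 0,
      hΔ1.eventually_const_lt one_pos] with n g1 g2 g4
    have g3 : (0 : ℝ) < n := by exact_mod_cast g2
    have : (n : ℝ) * ahat * q n = ahat * δ * Real.log n ^ 2 := by
      simp only [hq]; field_simp
    simp only [hx, this, Pi.div_apply, Pi.inv_apply]
    field_simp
  have hpos : ∀ᶠ n : ℕ in atTop, 0 < τ n ∧ 0 < Δ n ∧ 0 < (n : ℝ) ∧ 0 < q n ∧ 0 < Real.log n := by
    filter_upwards [hL.eventually_gt_atTop 0, eventually_gt_atTop 0,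
      hΔ1.eventually_const_lt one_pos, hτL.eventually_const_lt one_pos, hqpos] with n g1 g2 g4 g5 g6
    exact ⟨(div_pos_iff_of_pos_right g1).1 g5, g4, by exact_mod_cast g2, g6, g1⟩
  have hx1 : Tendsto x atTop (nhdsWithin 0 {0}ᶜ) := by
    refine tendsto_nhdsWithin_iff.2 ⟨hx0, ?_⟩
    filter_upwards [hpos] with n ⟨a, b, c, d, _⟩
    have : 0 < x n := by simp only [hx]; positivity
    exact this.ne'
  have hlog := ((Real.hasDerivAt_log one_ne_zero).tendsto_slope_zero).comp hx1
  have hfin := hτL.mul hlog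
  rw [inv_one, mul_one] at hfin
  refine hfin.congr' ?_
  filter_upwards [hpos] with n ⟨a, b, c, d, e⟩
  change _ = (n * q n * Δ n * Real.log (1 + x n)) * ahat / Real.log n
  simp only [Function.comp, smul_eq_mul, Real.log_one, sub_zero]
  generalize Real.log (1 + x n) = y
  simp only [hx]
  clear_value τ Δ q
  field_simp
end

section
/- Fix a real α̂ > 0. Let λ_n be positive integers with λ_n·(log n)²/n → ∞ and λ_n·(log n)/n → 0 as n → ∞. For each n large enough, define q_n := (1/λ_n)·log(λ_n·(log λ_n)²/(n·α̂)) (which lies in (0,1) for n large), τ_n := log(1/q_n), Δ_n := (1 − (1−q_n)^{λ_n})/(λ_n·q_n), and T_n := n·q_n·Δ_n·log(1 + τ_n/(n·α̂·q_n·Δ_n)). Then T_n·α̂/log n → 1 as n → ∞; that is, T_n is asymptotically equivalent to (log n)/α̂. -/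
open Filter Real

/-- Theorem 3, part (iii) (constant arrival process, `λ = ω(n/(log n)²)` and
`λ = o(n/log n)`): with positive integer delay bounds `λ_n` satisfying
`λ_n·(log n)²/n → ∞` and `λ_n·(log n)/n → 0`, activity probability
`q_n = (1/λ_n)·log(λ_n·(log λ_n)²/(n·ahat))`, threshold `τ_n = log(1/q_n)`, and
full-buffer probability `Δ_n = (1 − (1−q_n)^{λ_n})/(λ_n·q_n)`, the effective
throughput `T_n = n·q_n·Δ_n·log(1 + τ_n/(n·ahat·q_n·Δ_n))` satisfies
`T_n·ahat/log n → 1`. -/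
theorem effective_throughput_CAP_large_lambda (ahat : ℝ) (hahat : 0 < ahat)
    (lam : ℕ → ℕ) (hlam1 : ∀ n, 0 < lam n)
    (hlam_lo : Tendsto (fun n : ℕ => (lam n : ℝ) * (Real.log n) ^ 2 / n) atTop atTop)
    (hlam_hi : Tendsto (fun n : ℕ => (lam n : ℝ) * Real.log n / n) atTop (nhds 0)) :
    Tendsto (fun n : ℕ =>
      let q := (1 / (lam n : ℝ)) * Real.log ((lam n : ℝ) * (Real.log (lam n)) ^ 2 / (n * ahat))
      let τ := Real.log (1 / q)
      let Δ := (1 - (1 - q) ^ (lam n)) / ((lam n : ℝ) * q)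
      (n * q * Δ * Real.log (1 + τ / (n * ahat * q * Δ))) * ahat / Real.log n)
      atTop (nhds 1) := by
  have hL : Tendsto (fun n : ℕ => Real.log n) atTop atTop :=
    Real.tendsto_log_atTop.comp tendsto_natCast_atTop_atTop
  have hlogid : Tendsto (fun x : ℝ => Real.log x / x) atTop (nhds 0) :=
    Real.isLittleO_log_id_atTop.tendsto_div_nhds_zero
  have hLL : Tendsto (fun n : ℕ => Real.log (Real.log n) / Real.log n) atTop (nhds 0) :=
    hlogid.comp hL
  have hlampos : ∀ n, (0 : ℝ) < lam n := fun n => by exact_mod_cast hlam1 n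
  have hbase : ∀ᶠ n : ℕ in atTop, (0 : ℝ) < n ∧ 1 < Real.log n := by
    filter_upwards [hL.eventually_gt_atTop 1, eventually_gt_atTop 0] with n h1 h2
    exact ⟨by exact_mod_cast h2, h1⟩
  -- log of the first quantity
  have hA : Tendsto (fun n : ℕ => Real.log ((lam n : ℝ) * (Real.log n) ^ 2 / n) / Real.log n)
      atTop (nhds 0) := by
    refine squeeze_zero' ?_ ?_ hLL
    · filter_upwards [hbase, hlam_lo.eventually_ge_atTop 1] with n ⟨hn, hl⟩ h
      exact div_nonneg (Real.log_nonneg h) (by linarith)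
    · filter_upwards [hbase, hlam_lo.eventually_ge_atTop 1,
        hlam_hi.eventually_le_const (zero_lt_one)] with n ⟨hn, hl⟩ h h2
      have : (lam n : ℝ) * (Real.log n) ^ 2 / n ≤ Real.log n := by
        have e : (lam n : ℝ) * (Real.log n) ^ 2 / n = (lam n * Real.log n / n) * Real.log n := by
          ring
        rw [e]
        nlinarith
      gcongr
  have hr : Tendsto (fun n : ℕ => Real.log (lam n) / Real.log n) atTop (nhds 1) := by
    have h := (hA.sub (hLL.const_mul 2)).const_add 1
    simp only [mul_zero, sub_zero, add_zero] at h
    refine h.congr' ?_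
    filter_upwards [hbase] with n ⟨hn, hl⟩
    have hp := hlampos n
    rw [Real.log_div (by positivity) hn.ne', Real.log_mul hp.ne' (by positivity), Real.log_pow]
    field_simp
    push_cast
    ring
  set X : ℕ → ℝ := fun n => (lam n : ℝ) * (Real.log (lam n)) ^ 2 / (n * ahat) with hXdef
  have hX : Tendsto X atTop atTop := by
    have h := hlam_lo.atTop_mul_pos (C := 1 ^ 2 / ahat) (by positivity) ((hr.pow 2).div_const ahat)
    refine h.congr' ?_
    filter_upwards [hbase] with n ⟨hn, hl⟩
    simp only [hXdef]
    field_simp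
  have hXL : ∀ᶠ n : ℕ in atTop, X n ≤ Real.log n := by
    have h := hlam_hi.mul ((hr.pow 2).div_const ahat)
    rw [zero_mul] at h
    filter_upwards [hbase, h.eventually_le_const zero_lt_one] with n ⟨hn, hl⟩ h1
    have e : X n = ((lam n : ℝ) * Real.log n / n * ((Real.log (lam n) / Real.log n) ^ 2 / ahat))
        * Real.log n := by
      simp only [hXdef]
      field_simp
    rw [e]
    nlinarith
  have hl : Tendsto (fun n => Real.log (X n)) atTop atTop := Real.tendsto_log_atTop.comp hX
  have hlL : Tendsto (fun n => Real.log (X n) / Real.log n) atTop (nhds 0) := by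
    refine squeeze_zero' ?_ ?_ hLL
    · filter_upwards [hbase, hl.eventually_ge_atTop 1] with n ⟨hn, hl⟩ h
      exact div_nonneg (by linarith) (by linarith)
    · filter_upwards [hbase, hX.eventually_ge_atTop 1, hXL] with n ⟨hn, hl⟩ h h2
      gcongr
  have hllL : Tendsto (fun n => Real.log (Real.log (X n)) / Real.log n) atTop (nhds 0) := by
    refine squeeze_zero' ?_ ?_ hlL
    · filter_upwards [hbase, hl.eventually_ge_atTop 1] with n ⟨hn, hl⟩ h
      exact div_nonneg (Real.log_nonneg h) (by linarith)
    · filter_upwards [hbase, hl.eventually_ge_atTop 1] with n ⟨hn, hl⟩ h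
      have := Real.log_le_sub_one_of_pos (show 0 < Real.log (X n) by linarith)
      exact div_le_div_of_nonneg_right (by linarith) (by linarith)
  set q : ℕ → ℝ := fun n => (1 / (lam n : ℝ)) * Real.log (X n) with hqdef
  have hq : ∀ᶠ n in atTop, 0 < q n ∧ q n < 1 := by
    filter_upwards [hbase, hl.eventually_ge_atTop 1, hlL.eventually_lt hr zero_lt_one]
      with n ⟨hn, hl⟩ h h2
    have hp := hlampos n
    have h3 : Real.log (X n) < Real.log (lam n) := by
      rwa [div_lt_div_iff_of_pos_right (by linarith)] at h2
    have := Real.log_le_sub_one_of_pos hp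
    refine ⟨by simp only [hqdef]; positivity, ?_⟩
    simp only [hqdef]
    rw [one_div, inv_mul_lt_iff₀ hp]
    linarith
  have hP : Tendsto (fun n => 1 - (1 - q n) ^ (lam n)) atTop (nhds 1) := by
    have h0 : Tendsto (fun n => (1 - q n) ^ (lam n)) atTop (nhds 0) := by
      refine squeeze_zero' ?_ ?_ hX.inv_tendsto_atTop
      · filter_upwards [hq] with n ⟨h1, h2⟩
        exact pow_nonneg (by linarith) _
      · filter_upwards [hq, hX.eventually_gt_atTop 0] with n ⟨h1, h2⟩ h3
        have hp := hlampos n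
        calc (1 - q n) ^ (lam n) ≤ (Real.exp (- q n)) ^ (lam n) :=
              pow_le_pow_left₀ (by linarith) (Real.one_sub_le_exp_neg _) _
          _ = Real.exp (- Real.log (X n)) := by
              rw [← Real.exp_nat_mul]
              congr 1
              simp only [hqdef]
              field_simp
          _ = X⁻¹ n := by rw [Real.exp_neg, Real.exp_log h3]; rfl
    simpa using h0.const_sub 1
  set P : ℕ → ℝ := fun n => 1 - (1 - q n) ^ (lam n) with hPdef
  have hτ : Tendsto (fun n => Real.log (1 / q n) / Real.log n) atTop (nhds 1) := by
    have h := hr.sub hllL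
    rw [sub_zero] at h
    refine h.congr' ?_
    filter_upwards [hbase, hl.eventually_ge_atTop 1] with n ⟨hn, hl⟩ h
    have hp := hlampos n
    have e : 1 / q n = lam n / Real.log (X n) := by
      simp only [hqdef]
      field_simp
    rw [e, Real.log_div hp.ne' (by linarith), sub_div]
  set z : ℕ → ℝ := fun n => Real.log (1 / q n) * lam n / (n * ahat * P n) with hzdef
  have hz : Tendsto z atTop (nhds 0) := by
    have h := (hτ.mul hlam_hi).div (hP.const_mul ahat) (by simpa using hahat.ne')
    rw [mul_zero, zero_div] at h
    refine h.congr' ?_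
    filter_upwards [hbase, hP.eventually (lt_mem_nhds zero_lt_one)] with n ⟨hn, hl⟩ h1
    have : 0 < P n := h1
    simp only [hzdef, Pi.div_apply]
    change _ / (ahat * P n) = _
    field_simp
  have hzpos : ∀ᶠ n in atTop, 0 < z n := by
    filter_upwards [hbase, hP.eventually (lt_mem_nhds zero_lt_one), hq] with n ⟨hn, hl⟩ h1 ⟨h2, h3⟩
    have h4 : 0 < P n := h1
    have hp := hlampos n
    have : 0 < Real.log (1 / q n) := Real.log_pos (by rw [lt_div_iff₀ h2]; linarith)
    simp only [hzdef]
    positivity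
  have hlog : Tendsto (fun x : ℝ => Real.log (1 + x) / x) (nhdsWithin 0 {0}ᶜ) (nhds 1) := by
    have h := (Real.hasDerivAt_log one_ne_zero).tendsto_slope_zero
    simp only [Real.log_one, sub_zero, inv_one, smul_eq_mul] at h
    refine h.congr fun x => ?_
    ring
  have hlz : Tendsto (fun n => Real.log (1 + z n) / z n) atTop (nhds 1) := by
    refine hlog.comp (tendsto_nhdsWithin_iff.2 ⟨hz, ?_⟩)
    filter_upwards [hzpos] with n h
    exact h.ne'
  have hfin := hτ.mul hlz
  rw [mul_one] at hfin
  refine hfin.congr' ?_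
  filter_upwards [hbase, hP.eventually (lt_mem_nhds zero_lt_one), hq, hzpos]
    with n ⟨hn, hl⟩ h1 ⟨h2, h3⟩ h5
  have h4 : 0 < P n := h1
  have hp := hlampos n
  change _ = (n * q n * (P n / ((lam n : ℝ) * q n)) * Real.log (1 + Real.log (1 / q n) /
    (n * ahat * q n * (P n / ((lam n : ℝ) * q n))))) * ahat / Real.log n
  have e1 : Real.log (1 / q n) / (n * ahat * q n * (P n / ((lam n : ℝ) * q n))) = z n := by
    simp only [hzdef]
    field_simp
  have e2 : Real.log (1 / q n) = z n * (n * ahat * P n) / lam n := by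
    simp only [hzdef]
    field_simp
  rw [e1, e2]
  field_simp
end
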